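/- arXiv:1412.7817 — 2 statements merged into one kernel-verified Lean document; each statement's English description precedes it below -/
import Mathlib

section
/- Let d be a positive integer and let V and W be nonempty homogeneous varieties in the open unit ball B_d of C^d which are biholomorphically equivalent. Then there exists a biholomorphism of V onto W mapping 0 to 0; that is, there exist holomorphic maps F, G : B_d → C^d with F(V) = W, G ∘ F restricted to V equal to the identity of V, F ∘ G restricted to W equal to the identity of W, and F(0) = 0. -/
open Metric

/-- `V` is a homogeneous variety in the open unit ball of `ℂ^d`: the common zero set in the
ball of a set of homogeneous polynomials. -/
def IsHomogeneousVariety (d : ℕ) (V : Set (EuclideanSpace ℂ (Fin d))) : Prop :=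
  ∃ S : Set (MvPolynomial (Fin d) ℂ),
    (∀ p ∈ S, ∃ n : ℕ, p.IsHomogeneous n) ∧
    V = {z : EuclideanSpace ℂ (Fin d) |
          z ∈ ball (0 : EuclideanSpace ℂ (Fin d)) 1 ∧
          ∀ p ∈ S, MvPolynomial.eval (fun i => z i) p = 0}

/-!
Given biholomorphisms `φ : V → W` and `ψ : W → V`, rotate `W` by a small angle, carry the rotation
over to `V`, follow it by the rotation of `V` by `i`, and carry everything back to `W`. To first
order this moves `φ 0` radially towards the origin, by an amount controlled from below in terms of
`‖φ 0‖` alone. Hence there are biholomorphisms `φₖ : V → W` with `φₖ 0 → 0`, and then also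
`φₖ⁻¹ 0 → 0`.

In the limit along an ultrafilter, the Schwarz lemma on complex lines, applied to `φₖ` and to
`φₖ⁻¹`, holds with equality. By rigidity the limit is linear along each line through the origin,
so it agrees on `V` with the limit of the differentials of `φₖ` at `0`: it is a linear
biholomorphism of `V` onto `W`.
-/

open Filter Set
open scoped Topology

section BoundedHolomorphic

variable {E F : Type*} [NormedAddCommGroup E] [NormedSpace ℂ E]
  [NormedAddCommGroup F] [NormedSpace ℂ F]

theorem mapsTo_closedBall_two_mul {α G : Type*} [SeminormedAddCommGroup G] {f : α → G} {s : Set α}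
    {M : ℝ} (hf : MapsTo f s (closedBall 0 M)) {x : α} (hx : x ∈ s) :
    MapsTo f s (closedBall (f x) (2 * M)) := fun y hy =>
  calc dist (f y) (f x) ≤ dist (f y) 0 + dist (f x) 0 := dist_triangle_right ..
    _ ≤ M + M := add_le_add (hf hy) (hf hx)
    _ = 2 * M := (two_mul M).symm

theorem exists_tendsto_of_norm_le {ι G : Type*} [SeminormedAddCommGroup G] [ProperSpace G]
    (𝒰 : Ultrafilter ι) {u : ι → G} {M : ℝ} (hu : ∀ k, ‖u k‖ ≤ M) : ∃ x, Tendsto u 𝒰 (𝓝 x) := by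
  obtain ⟨x, -, hx⟩ := (isCompact_closedBall (0 : G) M).ultrafilter_le_nhds' (𝒰.map u)
    (Ultrafilter.mem_map.2 (Eventually.of_forall fun k => mem_closedBall_zero_iff.2 (hu k)))
  exact ⟨x, hx⟩

theorem dist_le_two_mul_div_mul_dist_of_mapsTo_ball {f : E → F} {x y : E} {r M : ℝ}
    (hd : DifferentiableOn ℂ f (ball x r)) (hf : MapsTo f (ball x r) (closedBall 0 M))
    (hy : y ∈ ball x r) : dist (f y) (f x) ≤ 2 * M / r * dist y x :=
  Complex.dist_le_div_mul_dist_of_mapsTo_ball hd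
    (mapsTo_closedBall_two_mul hf (mem_ball_self (pos_of_mem_ball hy))) hy

theorem norm_fderiv_le_two_mul_div_of_mapsTo_ball {f : E → F} {x : E} {r M : ℝ}
    (hd : DifferentiableOn ℂ f (ball x r)) (hf : MapsTo f (ball x r) (closedBall 0 M))
    (hr : 0 < r) : ‖fderiv ℂ f x‖ ≤ 2 * M / r :=
  Complex.norm_fderiv_le_div_of_mapsTo_ball hd (mapsTo_closedBall_two_mul hf (mem_ball_self hr)) hr

theorem norm_sub_sub_fderiv_le_of_mapsTo_ball {f : E → F} {x y : E} {r M : ℝ}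
    (hd : DifferentiableOn ℂ f (ball x r)) (hf : MapsTo f (ball x r) (closedBall 0 M))
    (hy : y ∈ ball x r) :
    ‖f y - f x - fderiv ℂ f x (y - x)‖ ≤ 4 * M * (‖y - x‖ / r) ^ 2 := by
  have hr : 0 < r := pos_of_mem_ball hy
  let g : E → F := fun w => f w - fderiv ℂ f x (w - x)
  have hgx : g x = f x := by simp [g]
  have hgd : DifferentiableOn ℂ g (ball x r) := hd.sub (by fun_prop)
  have hf' : ‖fderiv ℂ f x‖ * r ≤ 2 * M :=
    (le_div_iff₀ hr).1 (norm_fderiv_le_two_mul_div_of_mapsTo_ball hd hf hr)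
  have hg : MapsTo g (ball x r) (closedBall (g x) (4 * M)) := by
    intro w hw
    rw [mem_closedBall, hgx, dist_eq_norm, sub_right_comm]
    calc ‖f w - f x - fderiv ℂ f x (w - x)‖ ≤ ‖f w - f x‖ + ‖fderiv ℂ f x (w - x)‖ :=
          norm_sub_le _ _
      _ ≤ 2 * M + ‖fderiv ℂ f x‖ * r := by
          gcongr
          · exact mem_closedBall_iff_norm.1
              (mapsTo_closedBall_two_mul hf (mem_ball_self hr) hw)
          · exact (fderiv ℂ f x).le_opNorm_of_le (mem_ball_iff_norm.1 hw).le
      _ ≤ 4 * M := by linarith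
  have hgo : (g · - g x) =o[𝓝 x] fun w => ‖w - x‖ ^ 1 := by
    have := (hd.differentiableAt (ball_mem_nhds x hr)).hasFDerivAt.isLittleO.norm_right
    simpa [hgx, g, sub_right_comm] using this
  simpa [hgx, g, dist_eq_norm, sub_right_comm]
    using Complex.dist_le_mul_div_pow_of_mapsTo_ball_of_isLittleO hgd hg hgo hy

theorem eq_smul_deriv_zero_of_norm_eq [StrictConvexSpace ℝ F] {f : ℂ → F} {r : ℝ} {z : ℂ}
    (hd : DifferentiableOn ℂ f (ball 0 r)) (hf : MapsTo f (ball 0 r) (closedBall 0 r))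
    (h0 : f 0 = 0) (hz : z ∈ ball 0 r) (hfz : ‖f z‖ = ‖z‖) : f z = z • deriv f 0 := by
  have hr : 0 < r := pos_of_mem_ball hz
  obtain rfl | hz0 := eq_or_ne z 0
  · simp [h0]
  have hslope : ‖dslope f 0 z‖ = r / r := by
    rw [dslope_of_ne _ hz0, slope_def_module, norm_smul, norm_inv, h0, sub_zero, sub_zero, hfz,
      inv_mul_cancel₀ (norm_ne_zero_iff.2 hz0), div_self hr.ne']
  have hlin : EqOn f (fun w => w • dslope f 0 z) (ball 0 r) := by
    simpa [h0] using Complex.affine_of_mapsTo_ball_of_norm_dslope_eq_div hd (by rwa [h0]) hz hslope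
  have hderiv : deriv f 0 = dslope f 0 z := by
    rw [(hlin.eventuallyEq_of_mem (ball_mem_nhds 0 hr)).deriv_eq]
    simpa using ((hasDerivAt_id (0 : ℂ)).smul_const (dslope f 0 z)).deriv
  rw [hderiv]
  exact hlin hz

variable {ι : Type*} {U : Set E} {f : ι → E → F} {M : ℝ}

theorem equicontinuousOn_of_mapsTo_closedBall (hU : IsOpen U)
    (hd : ∀ k, DifferentiableOn ℂ (f k) U) (hf : ∀ k, MapsTo (f k) U (closedBall 0 M)) :
    EquicontinuousOn f U := by
  intro x hx
  obtain ⟨r, hr, hrU⟩ := Metric.isOpen_iff.1 hU x hx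
  have hlim : Tendsto (fun y => 2 * M / r * dist y x) (𝓝 x) (𝓝 0) :=
    (by fun_prop : Continuous fun y => 2 * M / r * dist y x).tendsto' x 0 (by simp)
  refine (equicontinuousAt_of_continuity_modulus _ hlim f ?_).equicontinuousWithinAt U
  filter_upwards [ball_mem_nhds x hr] with y hy k
  rw [dist_comm]
  exact dist_le_two_mul_div_mul_dist_of_mapsTo_ball ((hd k).mono hrU)
    ((hf k).mono_left hrU) hy

theorem tendstoLocallyUniformlyOn_of_equicontinuousOn {X α : Type*} [TopologicalSpace X]
    [LocallyCompactSpace X] [UniformSpace α] {U : Set X} {f : ι → X → α} {g : X → α}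
    {l : Filter ι} (hU : IsOpen U) (hf : EquicontinuousOn f U)
    (hg : ∀ x ∈ U, Tendsto (f · x) l (𝓝 (g x))) : TendstoLocallyUniformlyOn f g l U := by
  rw [tendstoLocallyUniformlyOn_iff_forall_isCompact hU]
  intro K hKU hK
  have hKf : ∀ K' ∈ ({K} : Set (Set X)), EquicontinuousOn f K' := by simpa using hf.mono hKU
  have hlim := (EquicontinuousOn.tendsto_uniformOnFun_iff_pi' (by simpa using hK) hKf l g).2
    (tendsto_pi_nhds.2 fun x => hg x (hKU (by simpa using x.2)))
  exact UniformOnFun.tendsto_iff_tendstoUniformlyOn.1 hlim K rfl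

theorem exists_tendstoLocallyUniformlyOn [LocallyCompactSpace E] [ProperSpace F]
    (𝒰 : Ultrafilter ι) (hU : IsOpen U) (hd : ∀ k, DifferentiableOn ℂ (f k) U)
    (hf : ∀ k, MapsTo (f k) U (closedBall 0 M)) :
    ∃ g, TendstoLocallyUniformlyOn f g 𝒰 U := by
  have hlim : ∀ x, ∃ y, x ∈ U → Tendsto (f · x) 𝒰 (𝓝 y) := by
    intro x
    by_cases hx : x ∈ U
    · obtain ⟨y, hy⟩ :=
        exists_tendsto_of_norm_le 𝒰 fun k => mem_closedBall_zero_iff.1 (hf k hx)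
      exact ⟨y, fun _ => hy⟩
    · exact ⟨0, fun h => absurd h hx⟩
  choose g hg using hlim
  exact ⟨g, tendstoLocallyUniformlyOn_of_equicontinuousOn hU
    (equicontinuousOn_of_mapsTo_closedBall hU hd hf) hg⟩

end BoundedHolomorphic

section BallCone

variable {E F G : Type*} [NormedAddCommGroup E] [NormedSpace ℂ E]
  [NormedAddCommGroup F] [NormedSpace ℂ F] [NormedAddCommGroup G] [NormedSpace ℂ G]

/-- The intersection of a closed complex cone with the open unit ball, as a relatively closed
subset of the ball. Homogeneous varieties are the motivating example. -/
structure IsBallCone (V : Set E) : Prop where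
  nonempty : V.Nonempty
  subset_ball : V ⊆ ball 0 1
  smul_mem : ∀ {z : E}, z ∈ V → ∀ {c : ℂ}, c • z ∈ ball 0 1 → c • z ∈ V
  closure_inter_ball_subset : closure V ∩ ball 0 1 ⊆ V

/-- A pair of mutually inverse biholomorphisms `φ : V → W` and `ψ : W → V`. Holomorphy is only
required of some extension to a neighbourhood of each point, which makes the notion stable under
composition. -/
structure IsBiholomorphicPair (V : Set E) (W : Set F) (φ : E → F) (ψ : F → E) : Prop where
  differentiableAt : ∀ z ∈ V, DifferentiableAt ℂ φ z
  differentiableAt_symm : ∀ w ∈ W, DifferentiableAt ℂ ψ w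
  mapsTo : MapsTo φ V W
  mapsTo_symm : MapsTo ψ W V
  leftInvOn : LeftInvOn ψ φ V
  rightInvOn : RightInvOn ψ φ W

namespace IsBiholomorphicPair

variable {V : Set E} {W : Set F} {X : Set G} {φ : E → F} {ψ : F → E}

theorem symm (h : IsBiholomorphicPair V W φ ψ) : IsBiholomorphicPair W V ψ φ :=
  ⟨h.differentiableAt_symm, h.differentiableAt, h.mapsTo_symm, h.mapsTo, h.rightInvOn, h.leftInvOn⟩

theorem comp {φ' : F → G} {ψ' : G → F} (h' : IsBiholomorphicPair W X φ' ψ')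
    (h : IsBiholomorphicPair V W φ ψ) : IsBiholomorphicPair V X (φ' ∘ φ) (ψ ∘ ψ') where
  differentiableAt z hz := (h'.differentiableAt _ (h.mapsTo hz)).comp z (h.differentiableAt z hz)
  differentiableAt_symm x hx :=
    (h.differentiableAt_symm _ (h'.mapsTo_symm hx)).comp x (h'.differentiableAt_symm x hx)
  mapsTo := h'.mapsTo.comp h.mapsTo
  mapsTo_symm := h.mapsTo_symm.comp h'.mapsTo_symm
  leftInvOn := h.leftInvOn.comp h'.leftInvOn h.mapsTo
  rightInvOn := h.rightInvOn.comp h'.rightInvOn h'.mapsTo_symm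

theorem image_eq (h : IsBiholomorphicPair V W φ ψ) : φ '' V = W :=
  h.mapsTo.image_subset.antisymm fun w hw => ⟨ψ w, h.mapsTo_symm hw, h.rightInvOn hw⟩

end IsBiholomorphicPair

namespace IsBallCone

variable {V : Set E} {z : E}

theorem zero_mem (hV : IsBallCone V) : (0 : E) ∈ V := by
  obtain ⟨z, hz⟩ := hV.nonempty
  simpa using hV.smul_mem hz (c := 0) (by simp)

theorem norm_lt_one (hV : IsBallCone V) (hz : z ∈ V) : ‖z‖ < 1 :=
  mem_ball_zero_iff.1 (hV.subset_ball hz)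

theorem mapsTo_closedBall {α : Type*} {f : α → E} {s : Set α} (hV : IsBallCone V)
    (hf : MapsTo f s V) : MapsTo f s (closedBall 0 1) :=
  hf.mono_right (hV.subset_ball.trans ball_subset_closedBall)

theorem isBiholomorphicPair_smul (hV : IsBallCone V) {c : ℂ} (hc : ‖c‖ = 1) :
    IsBiholomorphicPair V V (c • ·) (c⁻¹ • ·) := by
  have hc0 : c ≠ 0 := norm_ne_zero_iff.1 (hc ▸ one_ne_zero)
  have hmaps : ∀ a : ℂ, ‖a‖ = 1 → MapsTo (a • ·) V V := fun a ha z hz =>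
    hV.smul_mem hz (by simpa [norm_smul, ha] using hV.norm_lt_one hz)
  exact ⟨fun z _ => by fun_prop, fun z _ => by fun_prop, hmaps c hc, hmaps c⁻¹ (by simp [hc]),
    fun z _ => inv_smul_smul₀ hc0 z, fun z _ => smul_inv_smul₀ hc0 z⟩

theorem smul_normalize_mem (hV : IsBallCone V) (hz : z ∈ V) {c : ℂ} (hc : c ∈ ball 0 1) :
    c • NormedSpace.normalize z ∈ V := by
  have hcz : c • NormedSpace.normalize z = (c * (‖z‖⁻¹ : ℝ)) • z := by
    rw [NormedSpace.normalize, mul_smul, Complex.coe_smul]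
  rw [hcz]
  refine hV.smul_mem hz ?_
  rw [← hcz, mem_ball_zero_iff, norm_smul]
  refine (mul_le_of_le_one_right (norm_nonneg c) ?_).trans_lt (mem_ball_zero_iff.1 hc)
  simpa [NormedSpace.normalize, norm_smul] using inv_mul_le_one (a := ‖z‖)

end IsBallCone

section UnitSlice

variable {α : Type*}

/-- The restriction of `φ` to the complex line through `z`, parametrized by arc length, so that
`‖z‖` corresponds to `z`. For `z = 0` this is the constant `φ 0`. -/
noncomputable def unitSlice (φ : E → α) (z : E) (c : ℂ) : α := φ (c • NormedSpace.normalize z)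

theorem unitSlice_zero (φ : E → α) (z : E) : unitSlice φ z 0 = φ 0 := by simp [unitSlice]

theorem unitSlice_norm (φ : E → α) (z : E) : unitSlice φ z ‖z‖ = φ z := by
  rw [unitSlice, Complex.coe_smul, NormedSpace.norm_smul_normalize]

theorem mapsTo_unitSlice {V : Set E} {s : Set α} {φ : E → α} {z : E} (hV : IsBallCone V)
    (hφ : MapsTo φ V s) (hz : z ∈ V) : MapsTo (unitSlice φ z) (ball 0 1) s := fun _ hc =>
  hφ (hV.smul_normalize_mem hz hc)

end UnitSlice

theorem fderiv_zero_apply_eq_smul_deriv_unitSlice {φ : E → F} (h : DifferentiableAt ℂ φ 0)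
    (z : E) : fderiv ℂ φ 0 z = (‖z‖ : ℂ) • deriv (unitSlice φ z) 0 := by
  have hline :
      HasDerivAt (fun c : ℂ => c • NormedSpace.normalize z) (NormedSpace.normalize z) 0 := by
    simpa using (hasDerivAt_id (0 : ℂ)).smul_const (NormedSpace.normalize z)
  have hslice : HasDerivAt (unitSlice φ z) (fderiv ℂ φ 0 (NormedSpace.normalize z)) 0 :=
    HasFDerivAt.comp_hasDerivAt (0 : ℂ) (by simpa using h.hasFDerivAt) hline
  rw [hslice.deriv, ← map_smul, Complex.coe_smul, NormedSpace.norm_smul_normalize]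

section BoundedOnCone

variable {V : Set E} {φ : E → F} {z : E}

theorem differentiableOn_unitSlice (hV : IsBallCone V) (hφ : ∀ z ∈ V, DifferentiableAt ℂ φ z)
    (hz : z ∈ V) : DifferentiableOn ℂ (unitSlice φ z) (ball 0 1) := fun c hc => by
  have hline : DifferentiableAt ℂ (fun c : ℂ => c • NormedSpace.normalize z) c := by fun_prop
  exact ((hφ _ (hV.smul_normalize_mem hz hc)).comp c hline).differentiableWithinAt

theorem dist_zero_le_of_mapsTo_closedBall (hV : IsBallCone V)
    (hφ : ∀ z ∈ V, DifferentiableAt ℂ φ z) (hb : MapsTo φ V (closedBall 0 1)) (hz : z ∈ V) :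
    dist (φ z) (φ 0) ≤ 2 * ‖z‖ := by
  have hmem : (‖z‖ : ℂ) ∈ ball (0 : ℂ) 1 := by simpa using hV.norm_lt_one hz
  simpa [unitSlice_norm, unitSlice_zero] using
    dist_le_two_mul_div_mul_dist_of_mapsTo_ball (differentiableOn_unitSlice hV hφ hz)
      (mapsTo_unitSlice hV hb hz) hmem

theorem norm_fderiv_zero_apply_le_of_mapsTo_closedBall (hV : IsBallCone V)
    (hφ : ∀ z ∈ V, DifferentiableAt ℂ φ z) (hb : MapsTo φ V (closedBall 0 1)) (hz : z ∈ V) :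
    ‖fderiv ℂ φ 0 z‖ ≤ 2 * ‖z‖ := by
  rw [fderiv_zero_apply_eq_smul_deriv_unitSlice (hφ 0 hV.zero_mem), norm_smul, mul_comm]
  have hderiv : ‖deriv (unitSlice φ z) 0‖ ≤ 2 := by
    simpa [norm_deriv_eq_norm_fderiv] using norm_fderiv_le_two_mul_div_of_mapsTo_ball
      (differentiableOn_unitSlice hV hφ hz) (mapsTo_unitSlice hV hb hz) one_pos
  simpa using mul_le_mul_of_nonneg_right hderiv (norm_nonneg z)

end BoundedOnCone

end BallCone

section Recentering

variable {E F : Type*} [NormedAddCommGroup E] [NormedSpace ℂ E]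
  [NormedAddCommGroup F] [NormedSpace ℂ F] {V : Set E} {W : Set F} {φ : E → F} {ψ : F → E}

theorem exp_mul_I_smul_mem_ball {b : F} {s : ℂ} (hs : s ∈ ball 0 (1 - ‖b‖)) :
    Complex.exp (s * Complex.I) • b ∈ ball 0 1 := by
  have hre : (s * Complex.I).re < 1 - ‖b‖ :=
    (Complex.re_le_norm _).trans_lt (by simpa using hs)
  rw [mem_ball_zero_iff, norm_smul, Complex.norm_exp]
  calc Real.exp (s * Complex.I).re * ‖b‖
      ≤ Real.exp (s * Complex.I).re * Real.exp (‖b‖ - 1) := by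
        gcongr
        linarith [Real.add_one_le_exp (‖b‖ - 1)]
    _ = Real.exp ((s * Complex.I).re + (‖b‖ - 1)) := (Real.exp_add _ _).symm
    _ < 1 := Real.exp_lt_one_iff.2 (by linarith)

/-- The time `r ^ 2 * ‖g 0‖ / 8` minimizes the Taylor bound
`‖g t‖ ≤ (1 - t) * ‖g 0‖ + 4 * (t / r) ^ 2`. -/
theorem norm_le_sub_sq_of_hasDerivAt_neg {g : ℂ → F} {r : ℝ} (hr : r ∈ Ioc 0 1)
    (hd : DifferentiableOn ℂ g (ball 0 r)) (hg : MapsTo g (ball 0 r) (closedBall 0 1))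
    (hg' : HasDerivAt g (-g 0) 0) :
    ‖g (r ^ 2 * ‖g 0‖ / 8 : ℝ)‖ ≤ ‖g 0‖ - (r * ‖g 0‖ / 4) ^ 2 := by
  obtain ⟨hr0, hr1⟩ := hr
  have hg0 : ‖g 0‖ ≤ 1 := mem_closedBall_zero_iff.1 (hg (mem_ball_self hr0))
  set τ : ℝ := r ^ 2 * ‖g 0‖ / 8 with hτ
  have hτ0 : 0 ≤ τ := by positivity
  have hτr : τ < r := by
    nlinarith [mul_le_one₀ hr1 (norm_nonneg (g 0)) hg0]
  have hτmem : (τ : ℂ) ∈ ball (0 : ℂ) r := by simpa [abs_of_nonneg hτ0] using hτr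
  have htaylor : ‖g τ - (1 - τ) • g 0‖ ≤ 4 * (τ / r) ^ 2 := by
    have hlin : g τ - (1 - τ) • g 0 = g τ - g 0 - fderiv ℂ g 0 (τ - 0) := by
      rw [hg'.hasFDerivAt.fderiv]
      simp [sub_smul, sub_add]
    rw [hlin]
    simpa [abs_of_nonneg hτ0] using norm_sub_sub_fderiv_le_of_mapsTo_ball hd hg hτmem
  calc ‖g τ‖ ≤ ‖g τ - (1 - τ) • g 0‖ + ‖(1 - τ) • g 0‖ := norm_le_norm_sub_add _ _
    _ ≤ 4 * (τ / r) ^ 2 + (1 - τ) * ‖g 0‖ := by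
        rw [norm_smul, Real.norm_of_nonneg (by linarith)]
        gcongr
    _ = ‖g 0‖ - (r * ‖g 0‖ / 4) ^ 2 := by
        rw [hτ]
        field_simp
        ring

namespace IsBiholomorphicPair

/-- On velocities of curves in `W` the differentials of `φ` and `ψ` are inverse to each other, so
conjugating by them leaves multiplication by `c` unchanged. -/
theorem hasDerivAt_conj_smul (h : IsBiholomorphicPair V W φ ψ) (hV : 0 ∈ V) {γ : ℂ → F} {γ' : F}
    {s : ℂ} (hγ : HasDerivAt γ γ' s) (hγW : ∀ᶠ t in 𝓝 s, γ t ∈ W) (hs : γ s = φ 0) (c : ℂ) :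
    HasDerivAt (fun t => φ (c • ψ (γ t))) (c • γ') s := by
  have hψ : ψ (γ s) = 0 := by rw [hs, h.leftInvOn hV]
  have hφ : HasFDerivAt φ (fderiv ℂ φ 0) 0 := (h.differentiableAt 0 hV).hasFDerivAt
  have hψγ : HasDerivAt (ψ ∘ γ) (fderiv ℂ ψ (γ s) γ') s :=
    (h.differentiableAt_symm _ hγW.self_of_nhds).hasFDerivAt.comp_hasDerivAt s hγ
  have hinv : fderiv ℂ φ 0 (fderiv ℂ ψ (γ s) γ') = γ' := by
    have hφψγ : HasDerivAt (φ ∘ ψ ∘ γ) (fderiv ℂ φ 0 (fderiv ℂ ψ (γ s) γ')) s :=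
      HasFDerivAt.comp_hasDerivAt s (by simpa [hψ] using hφ) hψγ
    exact (hφψγ.congr_of_eventuallyEq (hγW.mono fun t ht => (h.rightInvOn ht).symm)).unique hγ
  rw [← hinv, ← map_smul]
  exact HasFDerivAt.comp_hasDerivAt s (by simpa [hψ] using hφ) (hψγ.const_smul c)

theorem norm_symm_map_zero_le (h : IsBiholomorphicPair V W φ ψ) (hV : IsBallCone V)
    (hW : IsBallCone W) : ‖ψ 0‖ ≤ 2 * ‖φ 0‖ := by
  simpa [h.leftInvOn hV.zero_mem] using dist_zero_le_of_mapsTo_closedBall hW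
    h.differentiableAt_symm (hV.mapsTo_closedBall h.mapsTo_symm) (h.mapsTo hV.zero_mem)

/-- The rotation of `W` by `exp (s * I)` is extended to complex times `s`, where `g s` is its
image under conjugation. Since `g' 0 = I • I • φ 0 = -φ 0`, small positive times move `φ 0`
towards the origin. -/
theorem exists_norm_map_zero_le (h : IsBiholomorphicPair V W φ ψ) (hV : IsBallCone V)
    (hW : IsBallCone W) : ∃ φ' ψ', IsBiholomorphicPair V W φ' ψ' ∧
      ‖φ' 0‖ ≤ ‖φ 0‖ - ((1 - ‖φ 0‖) * ‖φ 0‖ / 4) ^ 2 := by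
  have hbW : φ 0 ∈ W := h.mapsTo hV.zero_mem
  have hb1 : ‖φ 0‖ < 1 := hW.norm_lt_one hbW
  have hI := hV.isBiholomorphicPair_smul Complex.norm_I
  let γ : ℂ → F := fun s => Complex.exp (s * Complex.I) • φ 0
  let g : ℂ → F := fun s => φ (Complex.I • ψ (γ s))
  have hγW : MapsTo γ (ball 0 (1 - ‖φ 0‖)) W := fun s hs =>
    hW.smul_mem hbW (exp_mul_I_smul_mem_ball hs)
  have hIV : MapsTo (fun s => Complex.I • ψ (γ s)) (ball 0 (1 - ‖φ 0‖)) V :=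
    hI.mapsTo.comp (h.mapsTo_symm.comp hγW)
  have hγ' : ∀ s, HasDerivAt γ ((Complex.exp (s * Complex.I) * Complex.I) • φ 0) s := fun s => by
    simpa using (((hasDerivAt_id s).mul_const Complex.I).cexp).smul_const (φ 0)
  have hgd : DifferentiableOn ℂ g (ball 0 (1 - ‖φ 0‖)) := fun s hs =>
    ((h.differentiableAt _ (hIV hs)).comp s (((h.differentiableAt_symm _ (hγW hs)).comp s
      (hγ' s).differentiableAt).const_smul Complex.I)).differentiableWithinAt
  have hg0 : g 0 = φ 0 := by simp [g, γ, h.leftInvOn hV.zero_mem]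
  have hg' : HasDerivAt g (-g 0) 0 := by
    have hγ0 : ∀ᶠ s in 𝓝 0, γ s ∈ W :=
      eventually_of_mem (ball_mem_nhds 0 (sub_pos.2 hb1)) hγW
    simpa [hg0, smul_smul] using
      h.hasDerivAt_conj_smul hV.zero_mem (hγ' 0) hγ0 (by simp [γ]) Complex.I
  have hle := norm_le_sub_sq_of_hasDerivAt_neg ⟨sub_pos.2 hb1, by simp⟩ hgd
    (hW.mapsTo_closedBall (h.mapsTo.comp hIV)) hg'
  rw [hg0] at hle
  exact ⟨_, _, h.comp (hI.comp (h.symm.comp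
    ((hW.isBiholomorphicPair_smul (Complex.norm_exp_ofReal_mul_I _)).comp h))), hle⟩

theorem exists_seq_map_zero_tendsto_zero (h : IsBiholomorphicPair V W φ ψ) (hV : IsBallCone V)
    (hW : IsBallCone W) : ∃ (Φ : ℕ → E → F) (Ψ : ℕ → F → E),
      (∀ k, IsBiholomorphicPair V W (Φ k) (Ψ k)) ∧ Tendsto (Φ · 0) atTop (𝓝 0) := by
  let S : Set ℝ := {x | ∃ φ' ψ', IsBiholomorphicPair V W φ' ψ' ∧ ‖φ' 0‖ = x}
  have hbdd : BddBelow S := ⟨0, by rintro _ ⟨_, _, _, rfl⟩; exact norm_nonneg _⟩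
  obtain ⟨x, -, hx, hxS⟩ := exists_seq_tendsto_sInf (S := S) ⟨_, φ, ψ, h, rfl⟩ hbdd
  choose Φ Ψ hΦ hΦx using hxS
  have hstep : ∀ k, sInf S ≤ x k - ((1 - x k) * x k / 4) ^ 2 := fun k => by
    obtain ⟨φ', ψ', h', hle⟩ := (hΦ k).exists_norm_map_zero_le hV hW
    rw [hΦx k] at hle
    exact (csInf_le hbdd ⟨φ', ψ', h', rfl⟩).trans hle
  have hlim : sInf S ≤ sInf S - ((1 - sInf S) * sInf S / 4) ^ 2 :=
    ge_of_tendsto' (hx.sub ((((hx.const_sub 1).mul hx).div_const 4).pow 2)) hstep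
  have hlt : sInf S < 1 :=
    (csInf_le hbdd ⟨φ, ψ, h, rfl⟩).trans_lt (hW.norm_lt_one (h.mapsTo hV.zero_mem))
  have hzero : sInf S = 0 := by
    have hsq : ((1 - sInf S) * sInf S / 4) ^ 2 = 0 := le_antisymm (by linarith) (sq_nonneg _)
    simpa [sub_eq_zero, hlt.ne'] using hsq
  refine ⟨Φ, Ψ, hΦ, tendsto_zero_iff_norm_tendsto_zero.2 ?_⟩
  simpa only [hΦx, hzero] using hx

end IsBiholomorphicPair

end Recentering

section ContinuousConvergence

/-- Continuous convergence along `l` of the maps `T k` to `L` on `V`: the values `T k (u k)`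
converge to `L z` whenever the points `u k ∈ V` converge to `z`. The limit point `z` need not
belong to `V`. -/
def TendstoContinuouslyOn {ι X Y : Type*} [TopologicalSpace X] [TopologicalSpace Y]
    (T : ι → X → Y) (L : X → Y) (l : Filter ι) (V : Set X) : Prop :=
  ∀ ⦃u : ι → X⦄ ⦃z : X⦄, (∀ k, u k ∈ V) → Tendsto u l (𝓝 z) →
    Tendsto (fun k => T k (u k)) l (𝓝 (L z))

variable {𝕜 ι E F : Type*} [RCLike 𝕜] [NormedAddCommGroup E] [NormedSpace 𝕜 E]
  [NormedAddCommGroup F] [NormedSpace 𝕜 F]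

theorem exists_norm_apply_le_of_mem_span {T : ι → E →L[𝕜] F} {V : Set E}
    (hT : ∀ z ∈ V, ∃ C, ∀ k, ‖T k z‖ ≤ C) {x : E} (hx : x ∈ Submodule.span 𝕜 V) :
    ∃ C, ∀ k, ‖T k x‖ ≤ C := by
  induction hx using Submodule.span_induction with
  | mem x hx => exact hT x hx
  | zero => exact ⟨0, fun k => by simp⟩
  | add x y _ _ hx hy =>
    obtain ⟨C, hC⟩ := hx
    obtain ⟨D, hD⟩ := hy
    exact ⟨C + D, fun k => by simpa using norm_add_le_of_le (hC k) (hD k)⟩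
  | smul a x _ hx =>
    obtain ⟨C, hC⟩ := hx
    exact ⟨‖a‖ * C, fun k => by
      simpa [norm_smul] using mul_le_mul_of_nonneg_left (hC k) (norm_nonneg a)⟩

/-- The maps `T k` are only controlled on the span of `V`, so they are first composed with a
projection onto it. -/
theorem exists_tendstoContinuouslyOn [FiniteDimensional 𝕜 E] [FiniteDimensional 𝕜 F]
    (𝒰 : Ultrafilter ι) {T : ι → E →L[𝕜] F} {V : Set E} (hT : ∀ z ∈ V, ∃ C, ∀ k, ‖T k z‖ ≤ C) :
    ∃ L : E →L[𝕜] F, TendstoContinuouslyOn (fun k => T k) L 𝒰 V := by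
  have : CompleteSpace E := FiniteDimensional.complete 𝕜 E
  have : ProperSpace (E →L[𝕜] F) := FiniteDimensional.proper 𝕜 _
  obtain ⟨P, hP⟩ := Submodule.ClosedComplemented.of_finiteDimensional (Submodule.span 𝕜 V)
  let S : ι → E →L[𝕜] F := fun k => (T k).comp ((Submodule.span 𝕜 V).subtypeL.comp P)
  have hST : ∀ k, ∀ z ∈ V, S k z = T k z := fun k z hz => by
    simp [S, hP ⟨z, Submodule.subset_span hz⟩]
  obtain ⟨C, hC⟩ := banach_steinhaus (g := S) fun x =>
    exists_norm_apply_le_of_mem_span hT (P x).2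
  obtain ⟨L, hL⟩ := exists_tendsto_of_norm_le 𝒰 hC
  refine ⟨L, fun u z hu hz => ?_⟩
  have hpair : Tendsto (fun k => (S k, u k)) 𝒰 (𝓝 (L, z)) := hL.prodMk_nhds hz
  have hlim : Tendsto (fun k => S k (u k)) 𝒰 (𝓝 (L z)) :=
    (isBoundedBilinearMap_apply (𝕜 := 𝕜)).continuous.continuousAt.tendsto.comp hpair
  exact hlim.congr fun k => hST k _ (hu k)

end ContinuousConvergence

section Limit

variable {ι E F : Type*} [NormedAddCommGroup E] [NormedSpace ℂ E]
  [NormedAddCommGroup F] [NormedSpace ℂ F] {𝒰 : Ultrafilter ι} {V : Set E} {W : Set F}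

section Schwarz

variable [ProperSpace F] {Φ : ι → E → F} {u : ι → E} {z : E} {w : F}
  (hV : IsBallCone V) (hΦ : ∀ k, ∀ z ∈ V, DifferentiableAt ℂ (Φ k) z)
  (hb : ∀ k, MapsTo (Φ k) V (closedBall 0 1)) (h0 : Tendsto (Φ · 0) 𝒰 (𝓝 0))
  (hu : ∀ k, u k ∈ V) (hz : Tendsto u 𝒰 (𝓝 z)) (hz1 : ‖z‖ < 1)
  (hw : Tendsto (fun k => Φ k (u k)) 𝒰 (𝓝 w))

include hV hΦ hb h0 hu hz hz1 hw

theorem exists_limit_unitSlice :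
    ∃ g : ℂ → F, DifferentiableOn ℂ g (ball 0 1) ∧ MapsTo g (ball 0 1) (closedBall 0 1) ∧
      g 0 = 0 ∧ g ‖z‖ = w ∧
      Tendsto (fun k => fderiv ℂ (Φ k) 0 (u k)) 𝒰 (𝓝 ((‖z‖ : ℂ) • deriv g 0)) := by
  let f : ι → ℂ → F := fun k => unitSlice (Φ k) (u k)
  have hfd : ∀ k, DifferentiableOn ℂ (f k) (ball 0 1) := fun k =>
    differentiableOn_unitSlice hV (hΦ k) (hu k)
  have hfb : ∀ k, MapsTo (f k) (ball 0 1) (closedBall 0 1) := fun k =>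
    mapsTo_unitSlice hV (hb k) (hu k)
  obtain ⟨g, hg⟩ := exists_tendstoLocallyUniformlyOn 𝒰 isOpen_ball hfd hfb
  have hgd : DifferentiableOn ℂ g (ball 0 1) :=
    hg.differentiableOn (Eventually.of_forall hfd) isOpen_ball
  have h0mem : (0 : ℂ) ∈ ball (0 : ℂ) 1 := mem_ball_self one_pos
  have hzmem : (‖z‖ : ℂ) ∈ ball (0 : ℂ) 1 := by simpa using hz1
  have hnorm : Tendsto (fun k => (‖u k‖ : ℂ)) 𝒰 (𝓝 ‖z‖) := hz.norm.ofReal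
  refine ⟨g, hgd, fun c hc => ?_, ?_, ?_, ?_⟩
  · exact isClosed_closedBall.mem_of_tendsto (hg.tendsto_at hc)
      (Eventually.of_forall fun k => hfb k hc)
  · refine tendsto_nhds_unique (hg.tendsto_at h0mem) ?_
    simpa only [f, unitSlice_zero] using h0
  · refine tendsto_nhds_unique (hg.tendsto_comp (hgd.continuousOn _ hzmem) hzmem
      (tendsto_nhdsWithin_iff.2 ⟨hnorm, ?_⟩)) ?_
    · exact Eventually.of_forall fun k => by simpa using hV.norm_lt_one (hu k)
    · simpa only [f, unitSlice_norm] using hw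
  · have hderiv := (hg.deriv (Eventually.of_forall hfd) isOpen_ball).tendsto_at h0mem
    refine (hnorm.smul hderiv).congr fun k => ?_
    exact (fderiv_zero_apply_eq_smul_deriv_unitSlice (hΦ k 0 hV.zero_mem) (u k)).symm

theorem norm_limit_le : ‖w‖ ≤ ‖z‖ := by
  obtain ⟨g, hgd, hgb, hg0, rfl, -⟩ := exists_limit_unitSlice hV hΦ hb h0 hu hz hz1 hw
  have hzmem : ‖(‖z‖ : ℂ)‖ < 1 := by simpa using hz1
  simpa using Complex.norm_le_norm_of_mapsTo_ball hgd hgb hg0 hzmem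

theorem tendsto_fderiv_zero_apply_of_norm_limit_eq [StrictConvexSpace ℝ F] (hwz : ‖w‖ = ‖z‖) :
    Tendsto (fun k => fderiv ℂ (Φ k) 0 (u k)) 𝒰 (𝓝 w) := by
  obtain ⟨g, hgd, hgb, hg0, rfl, hlim⟩ := exists_limit_unitSlice hV hΦ hb h0 hu hz hz1 hw
  rwa [eq_smul_deriv_zero_of_norm_eq hgd hgb hg0 (by simpa using hz1) (by simpa using hwz)]

end Schwarz

variable {Φ : ι → E → F} {Ψ : ι → F → E} [ProperSpace E] [StrictConvexSpace ℝ E]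
  [ProperSpace F] [StrictConvexSpace ℝ F]

/-- The limit `w` of `Φ k z` satisfies `‖w‖ ≤ ‖z‖`, and `‖z‖ ≤ ‖w‖` since `Ψ k (Φ k z) = z`; both
Schwarz inequalities are therefore equalities. -/
theorem limit_fderiv_mem_and_leftInverse (hV : IsBallCone V) (hW : IsBallCone W)
    (h : ∀ k, IsBiholomorphicPair V W (Φ k) (Ψ k)) (hΦ0 : Tendsto (Φ · 0) 𝒰 (𝓝 0))
    (hΨ0 : Tendsto (Ψ · 0) 𝒰 (𝓝 0)) {L : E → F} {M : F → E}
    (hL : TendstoContinuouslyOn (fun k => fderiv ℂ (Φ k) 0) L 𝒰 V)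
    (hM : TendstoContinuouslyOn (fun k => fderiv ℂ (Ψ k) 0) M 𝒰 W) {z : E} (hz : z ∈ V) :
    L z ∈ W ∧ M (L z) = z := by
  have hΦb : ∀ k, MapsTo (Φ k) V (closedBall 0 1) := fun k => hW.mapsTo_closedBall (h k).mapsTo
  have hΨb : ∀ k, MapsTo (Ψ k) W (closedBall 0 1) := fun k =>
    hV.mapsTo_closedBall (h k).mapsTo_symm
  have hΦd := fun k => (h k).differentiableAt
  have hΨd := fun k => (h k).differentiableAt_symm
  have hz1 : ‖z‖ < 1 := hV.norm_lt_one hz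
  have hΦW : ∀ k, Φ k z ∈ W := fun k => (h k).mapsTo hz
  obtain ⟨w, hw⟩ := exists_tendsto_of_norm_le 𝒰 fun k => mem_closedBall_zero_iff.1 (hΦb k hz)
  have hΨw : Tendsto (fun k => Ψ k (Φ k z)) 𝒰 (𝓝 z) :=
    tendsto_const_nhds.congr fun k => ((h k).leftInvOn hz).symm
  have hwz : ‖w‖ ≤ ‖z‖ :=
    norm_limit_le hV hΦd hΦb hΦ0 (fun _ => hz) tendsto_const_nhds hz1 hw
  have hw1 : ‖w‖ < 1 := hwz.trans_lt hz1
  have hzw : ‖z‖ ≤ ‖w‖ := norm_limit_le hW hΨd hΨb hΨ0 hΦW hw hw1 hΨw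
  have hwW : w ∈ W := hW.closure_inter_ball_subset
    ⟨mem_closure_of_tendsto hw (Eventually.of_forall hΦW), mem_ball_zero_iff.2 hw1⟩
  have hLz : L z = w := tendsto_nhds_unique (hL (fun _ => hz) tendsto_const_nhds)
    (tendsto_fderiv_zero_apply_of_norm_limit_eq hV hΦd hΦb hΦ0 (fun _ => hz) tendsto_const_nhds
      hz1 hw (hwz.antisymm hzw))
  have hMw : M w = z := tendsto_nhds_unique (hM hΦW hw)
    (tendsto_fderiv_zero_apply_of_norm_limit_eq hW hΨd hΨb hΨ0 hΦW hw hw1 hΨw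
      (hzw.antisymm hwz))
  exact hLz ▸ ⟨hwW, hMw⟩

theorem isBiholomorphicPair_limit_fderiv (hV : IsBallCone V) (hW : IsBallCone W)
    (h : ∀ k, IsBiholomorphicPair V W (Φ k) (Ψ k)) (hΦ0 : Tendsto (Φ · 0) 𝒰 (𝓝 0))
    (hΨ0 : Tendsto (Ψ · 0) 𝒰 (𝓝 0)) {L : E →L[ℂ] F} {M : F →L[ℂ] E}
    (hL : TendstoContinuouslyOn (fun k => fderiv ℂ (Φ k) 0) L 𝒰 V)
    (hM : TendstoContinuouslyOn (fun k => fderiv ℂ (Ψ k) 0) M 𝒰 W) :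
    IsBiholomorphicPair V W L M := by
  have hVW := fun z => limit_fderiv_mem_and_leftInverse hV hW h hΦ0 hΨ0 hL hM (z := z)
  have hWV := fun w =>
    limit_fderiv_mem_and_leftInverse hW hV (fun k => (h k).symm) hΨ0 hΦ0 hM hL (z := w)
  exact ⟨fun _ _ => L.differentiableAt, fun _ _ => M.differentiableAt, fun z hz => (hVW z hz).1,
    fun w hw => (hWV w hw).1, fun z hz => (hVW z hz).2, fun w hw => (hWV w hw).2⟩

end Limit

section HomogeneousVariety

theorem eval_mul_of_isHomogeneous {σ R : Type*} [CommSemiring R] {p : MvPolynomial σ R} {n : ℕ}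
    (hp : p.IsHomogeneous n) (c : R) (x : σ → R) :
    MvPolynomial.eval (fun i => c * x i) p = c ^ n * MvPolynomial.eval x p := by
  rw [MvPolynomial.eval_eq, MvPolynomial.eval_eq, Finset.mul_sum]
  refine Finset.sum_congr rfl fun m hm => ?_
  have hdeg : ∏ i ∈ m.support, c ^ m i = c ^ n := by
    rw [Finset.prod_pow_eq_pow_sum, ← hp (MvPolynomial.mem_support_iff.1 hm),
      Finsupp.weight_apply, Finsupp.sum]
    simp
  rw [← hdeg]
  simp only [mul_pow, Finset.prod_mul_distrib]
  ring

theorem IsHomogeneousVariety.isBallCone {d : ℕ} {V : Set (EuclideanSpace ℂ (Fin d))}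
    (hV : IsHomogeneousVariety d V) (hne : V.Nonempty) : IsBallCone V := by
  obtain ⟨S, hS, rfl⟩ := hV
  refine ⟨hne, fun z hz => hz.1, fun {z} hz {c} hc => ⟨hc, fun p hp => ?_⟩, ?_⟩
  · obtain ⟨n, hn⟩ := hS p hp
    simpa [hz.2 p hp] using eval_mul_of_isHomogeneous hn c (z ·)
  · have hclosed : IsClosed {z : EuclideanSpace ℂ (Fin d) |
        ∀ p ∈ S, MvPolynomial.eval (fun i => z i) p = 0} := by
      simp only [ofPred_forall]
      exact isClosed_biInter fun p _ => isClosed_eq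
        ((MvPolynomial.continuous_eval p).comp (by fun_prop)) continuous_const
    exact fun z hz => ⟨hz.2, closure_minimal (fun w hw => hw.2) hclosed hz.1⟩

end HomogeneousVariety

theorem homogeneous_biholomorphic_zero_preserving_general {E F : Type*}
    [NormedAddCommGroup E] [NormedSpace ℂ E] [FiniteDimensional ℂ E] [StrictConvexSpace ℝ E]
    [NormedAddCommGroup F] [NormedSpace ℂ F] [FiniteDimensional ℂ F] [StrictConvexSpace ℝ F]
    {V : Set E} {W : Set F} {φ : E → F} {ψ : F → E} (hV : IsBallCone V) (hW : IsBallCone W)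
    (h : IsBiholomorphicPair V W φ ψ) :
    ∃ (L : E →L[ℂ] F) (M : F →L[ℂ] E), IsBiholomorphicPair V W L M := by
  have := FiniteDimensional.proper ℂ E
  have := FiniteDimensional.proper ℂ F
  obtain ⟨Φ, Ψ, hΦΨ, hΦ0⟩ := h.exists_seq_map_zero_tendsto_zero hV hW
  have hΦb := fun k => hW.mapsTo_closedBall (hΦΨ k).mapsTo
  have hΨb := fun k => hV.mapsTo_closedBall (hΦΨ k).mapsTo_symm
  have hΨ0 : Tendsto (Ψ · 0) atTop (𝓝 0) :=
    squeeze_zero_norm (fun k => (hΦΨ k).norm_symm_map_zero_le hV hW)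
      (by simpa using hΦ0.norm.const_mul 2)
  have hle : (hyperfilter ℕ : Filter ℕ) ≤ atTop := Nat.hyperfilter_le_atTop
  obtain ⟨L, hL⟩ := exists_tendstoContinuouslyOn (hyperfilter ℕ) fun z hz => ⟨2 * ‖z‖, fun k =>
    norm_fderiv_zero_apply_le_of_mapsTo_closedBall hV (hΦΨ k).differentiableAt (hΦb k) hz⟩
  obtain ⟨M, hM⟩ := exists_tendstoContinuouslyOn (hyperfilter ℕ) fun w hw => ⟨2 * ‖w‖, fun k =>
    norm_fderiv_zero_apply_le_of_mapsTo_closedBall hW (hΦΨ k).differentiableAt_symm (hΨb k) hw⟩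
  exact ⟨L, M, isBiholomorphicPair_limit_fderiv hV hW hΦΨ (hΦ0.mono_left hle)
    (hΨ0.mono_left hle) hL hM⟩

/-- If two nonempty homogeneous varieties in the finite-dimensional unit ball are
biholomorphically equivalent, then they are biholomorphically equivalent via a
biholomorphism fixing the origin. -/
theorem homogeneous_biholomorphic_zero_preserving (d : ℕ) (hd : 0 < d)
    (V W : Set (EuclideanSpace ℂ (Fin d))) (hV : IsHomogeneousVariety d V)
    (hW : IsHomogeneousVariety d W) (hVne : V.Nonempty) (hWne : W.Nonempty)
    (hbih : ∃ F G : EuclideanSpace ℂ (Fin d) → EuclideanSpace ℂ (Fin d),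
      DifferentiableOn ℂ F (ball 0 1) ∧ DifferentiableOn ℂ G (ball 0 1) ∧
      F '' V = W ∧ (∀ z ∈ V, G (F z) = z) ∧ (∀ w ∈ W, F (G w) = w)) :
    ∃ F G : EuclideanSpace ℂ (Fin d) → EuclideanSpace ℂ (Fin d),
      DifferentiableOn ℂ F (ball 0 1) ∧ DifferentiableOn ℂ G (ball 0 1) ∧
      F '' V = W ∧ (∀ z ∈ V, G (F z) = z) ∧ (∀ w ∈ W, F (G w) = w) ∧
      F 0 = 0 := by
  obtain ⟨F, G, hF, hG, rfl, hGF, hFG⟩ := hbih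
  have hV' := hV.isBallCone hVne
  have hW' := hW.isBallCone hWne
  have hFG' : IsBiholomorphicPair V (F '' V) F G :=
    { differentiableAt := fun z hz =>
        hF.differentiableAt (isOpen_ball.mem_nhds (hV'.subset_ball hz))
      differentiableAt_symm := fun w hw =>
        hG.differentiableAt (isOpen_ball.mem_nhds (hW'.subset_ball hw))
      mapsTo := mapsTo_image F V
      mapsTo_symm := by rintro _ ⟨z, hz, rfl⟩; rwa [hGF z hz]
      leftInvOn := hGF
      rightInvOn := hFG }
  obtain ⟨L, M, hLM⟩ := homogeneous_biholomorphic_zero_preserving_general hV' hW' hFG'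
  exact ⟨L, M, L.differentiable.differentiableOn, M.differentiable.differentiableOn, hLM.image_eq,
    hLM.leftInvOn, hLM.rightInvOn, map_zero L⟩
end

section
/- Let d be a positive integer and let V and W be nonempty homogeneous varieties in the open unit ball B_d of C^d which are biholomorphically equivalent. Then there exists a linear map A : C^d → C^d such that A(V) = W. -/
open Metric

/-!
A biholomorphism `F` fixing the origin is norm preserving by the Schwarz lemma applied to `F` and
to its inverse, so by the rigidity case of that lemma it is linear on each complex line through the
origin; hence it agrees on `V` with its derivative at the origin.

In general put `b = F 0` and `a = F⁻¹ 0`. The Schwarz lemma, precomposed with the disc automorphism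
that swaps `0` and `a`, gives `‖a‖ = ‖b‖`, and its rigidity case shows that `F` maps the disc
through `a` onto the disc through `b` by a Möbius map. That map sends some point `c • a` of the
circle of radius `‖a‖` to a point `e • b` with `|e| = 1`, and therefore the
biholomorphism `z ↦ F (c⁻¹ • F⁻¹ (e • F z))` of `V` onto `W` fixes the origin.
-/

open Set

variable {E E' E'' : Type*} [NormedAddCommGroup E] [NormedSpace ℂ E]
  [NormedAddCommGroup E'] [NormedSpace ℂ E'] [NormedAddCommGroup E''] [NormedSpace ℂ E'']

section DiscSwap

/-- The holomorphic involution of the disc of radius `R > 1` in `ℂ` that swaps `0` and `1`. -/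
noncomputable def discSwap (R : ℝ) (x : ℂ) : ℂ :=
  R ^ 2 * (1 - x) / (R ^ 2 - x)

variable {R : ℝ} {x : ℂ}

theorem discSwap_zero (hR : R ≠ 0) : discSwap R 0 = 1 := by
  simp [discSwap, hR]

theorem discSwap_one (R : ℝ) : discSwap R 1 = 0 := by
  simp [discSwap]

theorem sq_sub_ne_zero_of_mem_ball (hR : 1 < R) (hx : x ∈ ball 0 R) : (R : ℂ) ^ 2 - x ≠ 0 := by
  intro h
  have hnorm : ‖x‖ = R ^ 2 := by simp [← sub_eq_zero.mp h]
  have : ‖x‖ < R := mem_ball_zero_iff.mp hx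
  nlinarith

theorem normSq_sq_sub_sub_normSq_mul_one_sub (R : ℝ) (x : ℂ) :
    Complex.normSq (R ^ 2 - x) - R ^ 2 * Complex.normSq (1 - x) =
      (R ^ 2 - 1) * (R ^ 2 - Complex.normSq x) := by
  simp only [Complex.normSq_apply, ← Complex.ofReal_pow, Complex.sub_re, Complex.sub_im,
    Complex.ofReal_re, Complex.ofReal_im, Complex.one_re, Complex.one_im]
  ring

theorem mapsTo_discSwap_ball (hR : 1 < R) : MapsTo (discSwap R) (ball 0 R) (ball 0 R) := by
  intro x hx
  have hR0 : 0 < R := one_pos.trans hR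
  have hxR : ‖x‖ < R := mem_ball_zero_iff.mp hx
  have hpos : 0 < (R ^ 2 - 1) * (R ^ 2 - ‖x‖ ^ 2) :=
    mul_pos (by nlinarith) (by nlinarith [norm_nonneg x])
  have hsq : (R * ‖1 - x‖) ^ 2 < ‖(R : ℂ) ^ 2 - x‖ ^ 2 := by
    have := normSq_sq_sub_sub_normSq_mul_one_sub R x
    simp only [Complex.normSq_eq_norm_sq] at this
    linarith [mul_pow R ‖1 - x‖ 2]
  have hlt : R * ‖1 - x‖ < ‖(R : ℂ) ^ 2 - x‖ := lt_of_pow_lt_pow_left₀ 2 (norm_nonneg _) hsq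
  rw [mem_ball_zero_iff, discSwap, norm_div,
    div_lt_iff₀ (norm_pos_iff.mpr (sq_sub_ne_zero_of_mem_ball hR hx))]
  calc ‖(R : ℂ) ^ 2 * (1 - x)‖ = R * (R * ‖1 - x‖) := by
        rw [norm_mul, norm_pow, Complex.norm_of_nonneg hR0.le]; ring
    _ < R * ‖(R : ℂ) ^ 2 - x‖ := mul_lt_mul_of_pos_left hlt hR0

theorem discSwap_discSwap (hR : 1 < R) (hx : x ∈ ball 0 R) : discSwap R (discSwap R x) = x := by
  have hden := sq_sub_ne_zero_of_mem_ball hR hx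
  have hden' := sq_sub_ne_zero_of_mem_ball hR (mapsTo_discSwap_ball hR hx)
  rw [discSwap, div_eq_iff hden', discSwap]
  field_simp
  ring

theorem differentiableOn_discSwap (hR : 1 < R) : DifferentiableOn ℂ (discSwap R) (ball 0 R) :=
  DifferentiableOn.div (by fun_prop) (by fun_prop) fun _ => sq_sub_ne_zero_of_mem_ball hR

-- On the unit circle `|discSwap R c| = 1` is a linear equation in `Re c`, solved by `s` below.
theorem exists_norm_eq_one_norm_discSwap_eq_one (hR : 1 < R) :
    ∃ c : ℂ, ‖c‖ = 1 ∧ ‖discSwap R c‖ = 1 := by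
  have hR0 : R ≠ 0 := (one_pos.trans hR).ne'
  set s : ℝ := (1 + R ^ 2) / (2 * R ^ 2) with hs
  have hs0 : 0 ≤ s := by positivity
  have hs1 : s ≤ 1 := by
    rw [hs, div_le_one (by positivity)]
    nlinarith
  set c : ℂ := ⟨s, √(1 - s ^ 2)⟩
  have hc : Complex.normSq c = 1 := by
    rw [Complex.normSq_mk, Real.mul_self_sqrt (by nlinarith)]
    ring
  have hc1 : ‖c‖ = 1 := by
    rw [← sq_eq_sq₀ (norm_nonneg _) zero_le_one, ← Complex.normSq_eq_norm_sq, hc, one_pow]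
  refine ⟨c, hc1, ?_⟩
  have hden : (R : ℂ) ^ 2 - c ≠ 0 :=
    sq_sub_ne_zero_of_mem_ball hR (by rwa [mem_ball_zero_iff, hc1])
  have hone_sub : R ^ 2 * Complex.normSq (1 - c) = R ^ 2 - 1 := by
    rw [Complex.normSq_sub, hc]
    simp only [map_one, one_mul, Complex.conj_re, c, hs]
    field_simp
    ring
  have hsq : ‖(R : ℂ) ^ 2 * (1 - c)‖ ^ 2 = ‖(R : ℂ) ^ 2 - c‖ ^ 2 := by
    have := normSq_sq_sub_sub_normSq_mul_one_sub R c
    rw [← Complex.normSq_eq_norm_sq, ← Complex.normSq_eq_norm_sq, Complex.normSq_mul,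
      ← Complex.ofReal_pow, Complex.normSq_ofReal, Complex.ofReal_pow]
    linear_combination (R ^ 2 - 1) * hone_sub - this + (R ^ 2 - 1) * hc
  rw [discSwap, norm_div, (sq_eq_sq₀ (norm_nonneg _) (norm_nonneg _)).mp hsq,
    div_self (norm_ne_zero_iff.mpr hden)]

end DiscSwap

section Schwarz

variable {f : ℂ → E} {R M : ℝ}

theorem norm_map_one_le_div (hf : DifferentiableOn ℂ f (ball 0 R))
    (hmaps : MapsTo f (ball 0 R) (closedBall 0 M)) (hR : 1 < R) (hf0 : f 0 = 0) :
    ‖f 1‖ ≤ M / R := by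
  have := Complex.dist_le_div_mul_dist_of_mapsTo_ball (z := 1) hf (by rwa [hf0]) (by simpa using hR)
  simpa [hf0] using this

theorem eqOn_smul_map_one [StrictConvexSpace ℝ E] (hf : DifferentiableOn ℂ f (ball 0 R))
    (hmaps : MapsTo f (ball 0 R) (closedBall 0 M)) (hR : 1 < R) (hf0 : f 0 = 0)
    (hf1 : ‖f 1‖ = M / R) : EqOn f (fun x => x • f 1) (ball 0 R) := by
  have hslope : dslope f 0 1 = f 1 := by
    simp [dslope_of_ne, slope_def_module, hf0]
  have := Complex.affine_of_mapsTo_ball_of_norm_dslope_eq_div (z₀ := 1) hf (by rwa [hf0])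
    (by simpa using hR) (by rwa [hslope])
  simpa only [hslope, hf0, zero_add, sub_zero] using this

theorem norm_map_zero_le_div (hf : DifferentiableOn ℂ f (ball 0 R))
    (hmaps : MapsTo f (ball 0 R) (closedBall 0 M)) (hR : 1 < R) (hf1 : f 1 = 0) :
    ‖f 0‖ ≤ M / R := by
  have hswap := mapsTo_discSwap_ball hR
  have := norm_map_one_le_div (hf.comp (differentiableOn_discSwap hR) hswap)
    (hmaps.comp hswap) hR (by simp [discSwap_zero (one_pos.trans hR).ne', hf1])
  simpa [discSwap_one] using this

theorem eqOn_discSwap_smul_map_zero [StrictConvexSpace ℝ E]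
    (hf : DifferentiableOn ℂ f (ball 0 R)) (hmaps : MapsTo f (ball 0 R) (closedBall 0 M))
    (hR : 1 < R) (hf1 : f 1 = 0) (hf0 : ‖f 0‖ = M / R) :
    EqOn f (fun x => discSwap R x • f 0) (ball 0 R) := by
  intro x hx
  have hswap := mapsTo_discSwap_ball hR
  have := eqOn_smul_map_one (hf.comp (differentiableOn_discSwap hR) hswap) (hmaps.comp hswap) hR
    (by simp [discSwap_zero (one_pos.trans hR).ne', hf1]) (by simpa [discSwap_one]) (hswap hx)
  simpa [discSwap_one, discSwap_discSwap hR hx] using this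

end Schwarz

/-- A complex cone truncated by the open unit ball: a set of points of the ball that contains the
origin and every multiple of its points that still lies in the ball. Homogeneous varieties enter
the argument only through this property. -/
structure IsBallCone_s2 (V : Set E) : Prop where
  subset_ball : V ⊆ ball 0 1
  zero_mem : 0 ∈ V
  smul_mem : ∀ v ∈ V, ∀ c : ℂ, ‖c • v‖ < 1 → c • v ∈ V

namespace IsBallCone_s2

variable {V : Set E} {F : E → E'} {v : E} {x : ℂ}

theorem norm_lt_one_s2 (hV : IsBallCone_s2 V) (hv : v ∈ V) : ‖v‖ < 1 :=
  mem_ball_zero_iff.mp (hV.subset_ball hv)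

theorem one_lt_inv_norm (hV : IsBallCone_s2 V) (hv : v ∈ V) (hv0 : v ≠ 0) : 1 < ‖v‖⁻¹ :=
  (one_lt_inv₀ (norm_pos_iff.mpr hv0)).mpr (hV.norm_lt_one_s2 hv)

theorem mapsTo_smul_ball (hV : IsBallCone_s2 V) (hv : v ∈ V) :
    MapsTo (fun x : ℂ => x • v) (ball 0 ‖v‖⁻¹) V := by
  intro x hx
  rw [mem_ball_zero_iff] at hx
  have hpos : 0 < ‖v‖ := inv_pos.mp ((norm_nonneg x).trans_lt hx)
  exact hV.smul_mem v hv x (by rwa [norm_smul, ← lt_inv_mul_iff₀' hpos, mul_one])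

theorem differentiableOn_map_smul (hV : IsBallCone_s2 V) (hF : DifferentiableOn ℂ F V) (hv : v ∈ V) :
    DifferentiableOn ℂ (fun x : ℂ => F (x • v)) (ball 0 ‖v‖⁻¹) :=
  hF.comp (by fun_prop) (hV.mapsTo_smul_ball hv)

theorem norm_map_le (hV : IsBallCone_s2 V) (hF : DifferentiableOn ℂ F V)
    (hmaps : MapsTo F V (closedBall 0 1)) (hF0 : F 0 = 0) (hv : v ∈ V) : ‖F v‖ ≤ ‖v‖ := by
  rcases eq_or_ne v 0 with rfl | hv0
  · simp [hF0]
  · simpa using norm_map_one_le_div (hV.differentiableOn_map_smul hF hv)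
      (hmaps.comp (hV.mapsTo_smul_ball hv)) (hV.one_lt_inv_norm hv hv0) (by simpa)

theorem eqOn_map_smul [StrictConvexSpace ℝ E'] (hV : IsBallCone_s2 V) (hF : DifferentiableOn ℂ F V)
    (hmaps : MapsTo F V (closedBall 0 1)) (hF0 : F 0 = 0) (hv : v ∈ V) (hv0 : v ≠ 0)
    (hnorm : ‖F v‖ = ‖v‖) : EqOn (fun x : ℂ => F (x • v)) (fun x => x • F v) (ball 0 ‖v‖⁻¹) := by
  simpa using eqOn_smul_map_one (hV.differentiableOn_map_smul hF hv)
    (hmaps.comp (hV.mapsTo_smul_ball hv)) (hV.one_lt_inv_norm hv hv0) (by simpa) (by simpa)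

theorem norm_map_zero_le (hV : IsBallCone_s2 V) (hF : DifferentiableOn ℂ F V)
    (hmaps : MapsTo F V (closedBall 0 1)) (hv : v ∈ V) (hFv : F v = 0) : ‖F 0‖ ≤ ‖v‖ := by
  rcases eq_or_ne v 0 with rfl | hv0
  · simp [hFv]
  · simpa using norm_map_zero_le_div (hV.differentiableOn_map_smul hF hv)
      (hmaps.comp (hV.mapsTo_smul_ball hv)) (hV.one_lt_inv_norm hv hv0) (by simpa)

theorem eqOn_map_smul_discSwap [StrictConvexSpace ℝ E'] (hV : IsBallCone_s2 V)
    (hF : DifferentiableOn ℂ F V) (hmaps : MapsTo F V (closedBall 0 1)) (hv : v ∈ V) (hv0 : v ≠ 0)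
    (hFv : F v = 0) (hnorm : ‖F 0‖ = ‖v‖) :
    EqOn (fun x : ℂ => F (x • v)) (fun x => discSwap ‖v‖⁻¹ x • F 0) (ball 0 ‖v‖⁻¹) := by
  simpa using eqOn_discSwap_smul_map_zero (hV.differentiableOn_map_smul hF hv)
    (hmaps.comp (hV.mapsTo_smul_ball hv)) (hV.one_lt_inv_norm hv hv0) (by simpa) (by simpa)

-- A cone need not determine the derivative within it; its values on the cone are determined.
theorem fderivWithin_zero_apply (hV : IsBallCone_s2 V) (hF : DifferentiableOn ℂ F V) (hv : v ∈ V)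
    (hv0 : v ≠ 0) (hlin : EqOn (fun x : ℂ => F (x • v)) (fun x => x • F v) (ball 0 ‖v‖⁻¹)) :
    fderivWithin ℂ F V 0 v = F v := by
  have hnhds : ball (0 : ℂ) ‖v‖⁻¹ ∈ nhds 0 := ball_mem_nhds 0 (by positivity)
  have himage : HasDerivAt (fun x : ℂ => F (x • v)) (F v) 0 := by
    refine HasDerivAt.congr_of_eventuallyEq ?_ (hlin.eventuallyEq_of_mem hnhds)
    simpa using (hasDerivAt_id (0 : ℂ)).smul_const (F v)
  have hline : HasDerivAt (fun x : ℂ => x • v) v 0 := by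
    simpa using (hasDerivAt_id (0 : ℂ)).smul_const v
  have hchain : HasDerivAt (fun x : ℂ => F (x • v)) (fderivWithin ℂ F V 0 v) 0 :=
    ((hF 0 hV.zero_mem).hasFDerivWithinAt.comp_hasDerivWithinAt_of_eq 0 hline.hasDerivWithinAt
      (hV.mapsTo_smul_ball hv) (zero_smul ℂ v).symm).hasDerivAt hnhds
  exact hchain.unique himage

end IsBallCone_s2

/-- `F` restricts to a biholomorphism from `V` onto `W` with inverse `G`. Holomorphy is
differentiability within the sets, so `F` and `G` are unconstrained elsewhere. -/
structure BiholomorphicOn (F : E → E') (G : E' → E) (V : Set E) (W : Set E') : Prop where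
  differentiableOn : DifferentiableOn ℂ F V
  differentiableOn_inv : DifferentiableOn ℂ G W
  mapsTo : MapsTo F V W
  mapsTo_inv : MapsTo G W V
  invOn : InvOn G F V W

namespace BiholomorphicOn

variable {F : E → E'} {G : E' → E} {V : Set E} {W : Set E'}

theorem of_leftInvOn (hF : DifferentiableOn ℂ F V) (hG : DifferentiableOn ℂ G (F '' V))
    (hGF : LeftInvOn G F V) : BiholomorphicOn F G V (F '' V) where
  differentiableOn := hF
  differentiableOn_inv := hG
  mapsTo := mapsTo_image F V
  mapsTo_inv := mapsTo_image_iff.mpr ((mapsTo_id V).congr hGF.eqOn.symm)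
  invOn := ⟨hGF, forall_mem_image.mpr fun _ hv => congrArg F (hGF hv)⟩

theorem symm (h : BiholomorphicOn F G V W) : BiholomorphicOn G F W V :=
  ⟨h.differentiableOn_inv, h.differentiableOn, h.mapsTo_inv, h.mapsTo, h.invOn.symm⟩

theorem comp {F' : E' → E''} {G' : E'' → E'} {X : Set E''} (h' : BiholomorphicOn F' G' W X)
    (h : BiholomorphicOn F G V W) : BiholomorphicOn (F' ∘ F) (G ∘ G') V X where
  differentiableOn := h'.differentiableOn.comp h.differentiableOn h.mapsTo
  differentiableOn_inv := h.differentiableOn_inv.comp h'.differentiableOn_inv h'.mapsTo_inv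
  mapsTo := h'.mapsTo.comp h.mapsTo
  mapsTo_inv := h.mapsTo_inv.comp h'.mapsTo_inv
  invOn := h.invOn.comp h'.invOn h.mapsTo h'.mapsTo_inv

theorem image_eq (h : BiholomorphicOn F G V W) : F '' V = W :=
  (h.invOn.bijOn h.mapsTo h.mapsTo_inv).image_eq

theorem mapsTo_closedBall (h : BiholomorphicOn F G V W) (hW : IsBallCone_s2 W) :
    MapsTo F V (closedBall 0 1) :=
  h.mapsTo.mono_right (hW.subset_ball.trans ball_subset_closedBall)

theorem smul (hV : IsBallCone_s2 V) {c : ℂ} (hc : ‖c‖ = 1) :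
    BiholomorphicOn (c • ·) (c⁻¹ • ·) V V := by
  have hc0 : c ≠ 0 := norm_ne_zero_iff.mp (hc ▸ one_ne_zero)
  have hmaps {e : ℂ} (he : ‖e‖ = 1) : MapsTo (e • ·) V V := fun v hv =>
    hV.smul_mem v hv e (by simpa [norm_smul, he] using hV.norm_lt_one_s2 hv)
  exact ⟨by fun_prop, by fun_prop, hmaps hc, hmaps (by simp [hc]),
    fun v _ => inv_smul_smul₀ hc0 v, fun v _ => smul_inv_smul₀ hc0 v⟩

theorem norm_map_eq (h : BiholomorphicOn F G V W) (hV : IsBallCone_s2 V) (hW : IsBallCone_s2 W)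
    (hF0 : F 0 = 0) {v : E} (hv : v ∈ V) : ‖F v‖ = ‖v‖ := by
  have hG0 : G 0 = 0 := by simpa [hF0] using h.invOn.1 hV.zero_mem
  refine le_antisymm (hV.norm_map_le h.differentiableOn (h.mapsTo_closedBall hW) hF0 hv) ?_
  have := hW.norm_map_le h.symm.differentiableOn (h.symm.mapsTo_closedBall hV) hG0 (h.mapsTo hv)
  rwa [h.invOn.1 hv] at this

theorem norm_map_zero_eq (h : BiholomorphicOn F G V W) (hV : IsBallCone_s2 V) (hW : IsBallCone_s2 W) :
    ‖F 0‖ = ‖G 0‖ :=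
  le_antisymm
    (hV.norm_map_zero_le h.differentiableOn (h.mapsTo_closedBall hW)
      (h.mapsTo_inv hW.zero_mem) (h.invOn.2 hW.zero_mem))
    (hW.norm_map_zero_le h.symm.differentiableOn (h.symm.mapsTo_closedBall hV)
      (h.mapsTo hV.zero_mem) (h.invOn.1 hV.zero_mem))

variable [StrictConvexSpace ℝ E']

theorem eqOn_fderivWithin_zero (h : BiholomorphicOn F G V W) (hV : IsBallCone_s2 V)
    (hW : IsBallCone_s2 W) (hF0 : F 0 = 0) : EqOn (fderivWithin ℂ F V 0) F V := by
  intro v hv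
  rcases eq_or_ne v 0 with rfl | hv0
  · rw [map_zero, hF0]
  · exact hV.fderivWithin_zero_apply h.differentiableOn hv hv0 <|
      hV.eqOn_map_smul h.differentiableOn (h.mapsTo_closedBall hW) hF0 hv hv0
        (h.norm_map_eq hV hW hF0 hv)

theorem exists_map_smul_inv_zero_eq_smul_map_zero (h : BiholomorphicOn F G V W) (hV : IsBallCone_s2 V)
    (hW : IsBallCone_s2 W) :
    ∃ c e : ℂ, ‖c‖ = 1 ∧ ‖e‖ = 1 ∧ F (c • G 0) = e • F 0 := by
  have hGV : G 0 ∈ V := h.mapsTo_inv hW.zero_mem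
  have hFG : F (G 0) = 0 := h.invOn.2 hW.zero_mem
  rcases eq_or_ne (G 0) 0 with hG0 | hG0
  · exact ⟨1, 1, norm_one, norm_one, by rw [hG0, smul_zero, one_smul]⟩
  have hR := hV.one_lt_inv_norm hGV hG0
  obtain ⟨c, hc, hswap⟩ := exists_norm_eq_one_norm_discSwap_eq_one hR
  exact ⟨c, discSwap ‖G 0‖⁻¹ c, hc, hswap,
    hV.eqOn_map_smul_discSwap h.differentiableOn (h.mapsTo_closedBall hW) hGV hG0 hFG
      (h.norm_map_zero_eq hV hW) (by rwa [mem_ball_zero_iff, hc])⟩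

theorem exists_map_zero_eq_zero (h : BiholomorphicOn F G V W) (hV : IsBallCone_s2 V)
    (hW : IsBallCone_s2 W) : ∃ H K, BiholomorphicOn H K V W ∧ H 0 = 0 := by
  obtain ⟨c, e, hc, he, hce⟩ := h.exists_map_smul_inv_zero_eq_smul_map_zero hV hW
  have hc0 : c ≠ 0 := norm_ne_zero_iff.mp (hc ▸ one_ne_zero)
  have hcG : c • G 0 ∈ V := (smul hV hc).mapsTo (h.mapsTo_inv hW.zero_mem)
  refine ⟨_, _, h.comp <| (smul hV hc).symm.comp <| h.symm.comp <| (smul hW he).comp h, ?_⟩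
  calc F (c⁻¹ • G (e • F 0)) = F (c⁻¹ • c • G 0) := by rw [← hce, h.invOn.1 hcG]
    _ = 0 := by rw [inv_smul_smul₀ hc0, h.invOn.2 hW.zero_mem]

end BiholomorphicOn

theorem eval_smul_of_isHomogeneous {σ R : Type*} [CommSemiring R] {p : MvPolynomial σ R} {n : ℕ}
    (hp : p.IsHomogeneous n) (c : R) (z : σ → R) :
    MvPolynomial.eval (c • z) p = c ^ n * MvPolynomial.eval z p := by
  rw [MvPolynomial.eval_eq, MvPolynomial.eval_eq, Finset.mul_sum]
  refine Finset.sum_congr rfl fun m hm => ?_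
  have hdeg : ∑ i ∈ m.support, m i = n := by
    rw [← Finsupp.degree_apply, Finsupp.degree_eq_weight_one]
    exact hp (MvPolynomial.mem_support_iff.mp hm)
  simp only [Pi.smul_apply, smul_eq_mul, mul_pow, Finset.prod_mul_distrib,
    Finset.prod_pow_eq_pow_sum, hdeg]
  ring

namespace IsHomogeneousVariety

variable {d : ℕ} {V : Set (EuclideanSpace ℂ (Fin d))}

theorem smul_mem (hV : IsHomogeneousVariety d V) {v : EuclideanSpace ℂ (Fin d)} (hv : v ∈ V)
    {c : ℂ} (hc : ‖c • v‖ < 1) : c • v ∈ V := by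
  obtain ⟨S, hS, rfl⟩ := hV
  refine ⟨mem_ball_zero_iff.mpr hc, fun p hp => ?_⟩
  obtain ⟨n, hn⟩ := hS p hp
  exact (eval_smul_of_isHomogeneous hn c fun i => v i).trans (by rw [hv.2 p hp, mul_zero])

theorem subset_ball (hV : IsHomogeneousVariety d V) : V ⊆ ball 0 1 := by
  obtain ⟨S, -, rfl⟩ := hV
  exact fun z hz => hz.1

theorem isBallCone_s2 (hV : IsHomogeneousVariety d V) (hne : V.Nonempty) : IsBallCone_s2 V where
  subset_ball := hV.subset_ball
  zero_mem := by
    obtain ⟨v, hv⟩ := hne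
    simpa using hV.smul_mem hv (c := 0) (by simp)
  smul_mem := fun _ hv _ hc => hV.smul_mem hv hc

end IsHomogeneousVariety

theorem homogeneous_biholomorphic_implies_linear_general [StrictConvexSpace ℝ E']
    {V : Set E} {W : Set E'} (hV : IsBallCone_s2 V) (hW : IsBallCone_s2 W)
    {F : E → E'} {G : E' → E} (h : BiholomorphicOn F G V W) :
    ∃ A : E →L[ℂ] E', A '' V = W := by
  obtain ⟨H, K, hHK, hH0⟩ := h.exists_map_zero_eq_zero hV hW
  exact ⟨fderivWithin ℂ H V 0,
    (hHK.eqOn_fderivWithin_zero hV hW hH0).image_eq.trans hHK.image_eq⟩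

/-- If two nonempty homogeneous varieties in the finite-dimensional unit ball are
biholomorphically equivalent, then a linear map takes one onto the other. -/
theorem homogeneous_biholomorphic_implies_linear (d : ℕ) (hd : 0 < d)
    (V W : Set (EuclideanSpace ℂ (Fin d))) (hV : IsHomogeneousVariety d V)
    (hW : IsHomogeneousVariety d W) (hVne : V.Nonempty) (hWne : W.Nonempty)
    (hbih : ∃ F G : EuclideanSpace ℂ (Fin d) → EuclideanSpace ℂ (Fin d),
      DifferentiableOn ℂ F (ball 0 1) ∧ DifferentiableOn ℂ G (ball 0 1) ∧
      F '' V = W ∧ (∀ z ∈ V, G (F z) = z) ∧ (∀ w ∈ W, F (G w) = w)) :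
    ∃ A : EuclideanSpace ℂ (Fin d) →ₗ[ℂ] EuclideanSpace ℂ (Fin d), A '' V = W := by
  obtain ⟨F, G, hF, hG, rfl, hGF, -⟩ := hbih
  have hVcone := hV.isBallCone_s2 hVne
  have hWcone := hW.isBallCone_s2 hWne
  have hFG : BiholomorphicOn F G V (F '' V) :=
    .of_leftInvOn (hF.mono hVcone.subset_ball) (hG.mono hWcone.subset_ball) hGF
  obtain ⟨A, hA⟩ := homogeneous_biholomorphic_implies_linear_general hVcone hWcone hFG
  exact ⟨A, hA⟩
end
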